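/- For all n ≥ 3 and all natural numbers u, v, the number of π ∈ NC(n,3) with skip(π) = u and leap(π) = v equals the number of parallelogram polyominoes P ∈ PP(n−2,3) with area(P) = u and bounce(P) = v. (The pair (skip, leap) is a combinatorial interpretation of the q,t-Narayana polynomial N_{n,3}(q,t).) -/

import Mathlib

namespace QtN

/-! ### Lattice paths and parallelogram polyominoes -/

/-- A step of a lattice path: east or north. -/
inductive Step : Type
  | E : Step
  | N : Step
  deriving DecidableEq, Repr

/-- Number of east steps of a path. -/
def countE (w : List Step) : ℕ := w.count Step.E

/-- Number of north steps of a path. -/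
def countN (w : List Step) : ℕ := w.count Step.N

/-- Endpoint of a path started at the origin. -/
def pathPos (w : List Step) : ℕ × ℕ := (countE w, countN w)

/-- The set of lattice points visited by a path started at the origin. -/
def pathPts (w : List Step) : Finset (ℕ × ℕ) :=
  ((List.range (w.length + 1)).map (fun i => pathPos (w.take i))).toFinset

/-- `colHeightsAux w h`: for each east step of `w` (in order), the number of north
steps preceding it, starting with `h` north steps already performed. -/
def colHeightsAux : List Step → ℕ → List ℕ
  | [], _ => []
  | Step.E :: r, h => h :: colHeightsAux r h
  | Step.N :: r, h => colHeightsAux r (h + 1)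

/-- Height at which the path `w` crosses the vertical strip `i ≤ x ≤ i + 1`. -/
def colHeight (w : List Step) (i : ℕ) : ℕ := (colHeightsAux w 0).getD i 0

/-- A parallelogram polyomino of size `m × n`: a pair of monotone lattice paths from
`(0,0)` to `(m,n)` (east/north steps), the upper path staying weakly above the lower
path, and the two paths meeting only at `(0,0)` and `(m,n)`. -/
structure Polyomino (m n : ℕ) : Type where
  lower : List Step
  upper : List Step
  lowerE : countE lower = m
  lowerN : countN lower = n
  upperE : countE upper = m
  upperN : countN upper = n
  above : ∀ i < m, colHeight lower i ≤ colHeight upper i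
  meet : pathPts upper ∩ pathPts lower = {(0, 0), (m, n)}

/-- The area statistic: number of unit squares between the two paths,
minus `(m + n - 1)`. -/
def area {m n : ℕ} (P : Polyomino m n) : ℕ :=
  (∑ i ∈ Finset.range m, (colHeight P.upper i - colHeight P.lower i)) - (m + n - 1)

/-- Where an eastward run at height `y`, starting at `x`, first hits the lower path. -/
def eastTarget (hL : ℕ → ℕ) (m x y : ℕ) : ℕ :=
  ((List.range m).filter (fun i => decide (x ≤ i ∧ y ≤ hL i))).headD m

/-- Total bounce contribution: from state `(x, y)` just after the `j`-th east-to-north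
turn (counting the turns made so far), alternately go north until hitting the upper
path and east until hitting the lower path, each step contributing the number of
east-to-north turns preceding it. -/
def bounceAux (hU hL : ℕ → ℕ) (m n : ℕ) : ℕ → ℕ → ℕ → ℕ → ℕ
  | 0, _, _, _ => 0
  | fuel + 1, x, y, j =>
    if x = m ∧ y = n then 0
    else
      let y' := hU (x - 1)
      let x' := if y' = n then m else eastTarget hL m x y'
      (j + 1) * ((y' - y) + (x' - x)) + bounceAux hU hL m n fuel x' y' (j + 1)

/-- The bounce statistic of a parallelogram polyomino: the bounce path starts with a
single east step (contributing `0`) and then alternates north runs (to the ceiling)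
and east runs (to the floor); each step contributes the number of east-to-north turns
preceding it; finally `(m + n - 1)` is subtracted. -/
def bounce {m n : ℕ} (P : Polyomino m n) : ℕ :=
  bounceAux (colHeight P.upper) (colHeight P.lower) m n (m + n + 2) 1 0 0 - (m + n - 1)

/-! ### Set partitions and noncrossing partitions -/

/-- Maximum of a finite set of naturals (`0` for the empty set). -/
def fmax (β : Finset ℕ) : ℕ := β.sup id

/-- Minimum of a finite set of naturals (`0` for the empty set). -/
def fmin (β : Finset ℕ) : ℕ := if h : β.Nonempty then β.min' h else 0

/-- A set partition of `{1, …, n}`, given by its finite set of blocks. -/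
structure SetPartition (n : ℕ) : Type where
  blocks : Finset (Finset ℕ)
  not_empty_mem : ∅ ∉ blocks
  cover : ∀ i : ℕ, i ∈ Finset.Icc 1 n ↔ ∃ β ∈ blocks, i ∈ β
  disjoint : ∀ β ∈ blocks, ∀ γ ∈ blocks, β ≠ γ → Disjoint β γ

/-- A family of blocks is noncrossing if there are no `a < b < c < d` with
`a, c` in one block and `b, d` in a different block. -/
def IsNoncrossing (bs : Finset (Finset ℕ)) : Prop :=
  ∀ a b c d : ℕ, a < b → b < c → c < d →
    ∀ β ∈ bs, ∀ γ ∈ bs, a ∈ β → c ∈ β → b ∈ γ → d ∈ γ → β = γ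

/-- `NC n k`: noncrossing partitions of `{1, …, n}` with exactly `n - k + 1` blocks. -/
abbrev NC (n k : ℕ) : Type :=
  {P : SetPartition n // IsNoncrossing P.blocks ∧ P.blocks.card = n - k + 1}

/-- The skip statistic: `∑_{β} (max β - min β - |β| + 1)`. -/
def skip (bs : Finset (Finset ℕ)) : ℕ :=
  ∑ β ∈ bs, ((fmax β + 1 - fmin β) - β.card)

/-- The non-singleton blocks of a partition. -/
def nsBlocks (bs : Finset (Finset ℕ)) : Finset (Finset ℕ) :=
  bs.filter (fun β => 2 ≤ β.card)

/-- The block of `bs` containing `x` (junk if there is not exactly one). -/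
def blockContaining (bs : Finset (Finset ℕ)) (x : ℕ) : Finset ℕ :=
  (bs.filter (fun β => x ∈ β)).sup id

/-- For a noncrossing partition in `NC n 3`, the quadruple `(a, b, c, d)` describing its
non-singleton blocks: for two pair blocks `{a,b}` and `{c,d}` (with `a` the global
minimum) this is `(a, b, c, d)`; for a single triple block `{a, b, c}` (`a < b < c`)
this is `(a, b, b, c)`. -/
def blockQuad (bs : Finset (Finset ℕ)) : ℕ × ℕ × ℕ × ℕ :=
  let A := blockContaining (nsBlocks bs) (fmin ((nsBlocks bs).sup id))
  if (nsBlocks bs).card = 1 then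
    let l := A.sort (· ≤ ·)
    (l.getD 0 0, l.getD 1 0, l.getD 1 0, l.getD 2 0)
  else
    let B := ((nsBlocks bs).erase A).sup id
    (fmin A, fmax A, fmin B, fmax B)

/-- The leap statistic on `NC n 3`: `leap(ab|cd) = c - 2 + max(0, c - b)`,
and `leap({a,b,c}) = b - 2` (the case `b = c`). -/
def leap (bs : Finset (Finset ℕ)) : ℕ :=
  let (_, b, c, _) := blockQuad bs
  (c - 2) + (c - b)

/-- The skew statistic on `NC n 3`: `skew(ab|cd) = c - 2 + a` if `b < c`, else `c - 2`;
`skew({a,b,c}) = b - 2` (the case `b = c`). -/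
def skew (bs : Finset (Finset ℕ)) : ℕ :=
  let (a, b, c, _) := blockQuad bs
  if b < c then c - 2 + a else c - 2

/-- The mag statistic on `NC n 3`: `mag(ab|cd) = a + max(b, c) - 2 - ⌈(b - a)/2⌉`,
and `mag({a,b,c}) = a + b - 2 - ⌈(b - a)/2⌉` (the case `b = c`). -/
def mag (bs : Finset (Finset ℕ)) : ℕ :=
  let (a, b, c, _) := blockQuad bs
  a + max b c - 2 - (b - a + 1) / 2

/-- The area statistic on noncrossing partitions:
`area(π) = ∑_{β, β' ∈ π} #{ i ∈ β' : i < max β < max β' }` (ordered pairs of blocks). -/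
def ncArea (bs : Finset (Finset ℕ)) : ℕ :=
  ∑ β ∈ bs, ∑ γ ∈ bs, (γ.filter (fun i => i < fmax β ∧ fmax β < fmax γ)).card

/-- The elements of the non-singleton blocks, listed in increasing order, with
the middle element of a size-3 block listed twice. -/
def nsList (bs : Finset (Finset ℕ)) : List ℕ :=
  let l := ((nsBlocks bs).sup id).sort (· ≤ ·)
  if l.length = 3 then [l.getD 0 0, l.getD 1 0, l.getD 1 0, l.getD 2 0] else l

/-- The multiset of block sizes of a partition. -/
def blockSizes (bs : Finset (Finset ℕ)) : Multiset ℕ := bs.val.map Finset.card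

/-- The image of a partition of `{1, …, n}` under the flip `i ↦ n + 1 - i`. -/
def flipBlocks (n : ℕ) (bs : Finset (Finset ℕ)) : Finset (Finset ℕ) :=
  bs.image (fun β => β.image (fun i => n + 1 - i))

/-! ### The mingarc statistic -/

/-- The gaps `ν_r = m_{r+1} - m_r - 1` between consecutive block minima
`m_1 < ⋯ < m_h` (with `m_{h+1} = n + 1`). -/
def nuList (n : ℕ) (bs : Finset (Finset ℕ)) : List ℕ :=
  let ms := ((bs.image fmin).sort (· ≤ ·)) ++ [n + 1]
  (List.range (bs.image fmin).card).map (fun r => ms.getD (r + 1) 0 - ms.getD r 0 - 1)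

/-- Concatenation of `replicate ν c` over a list of pairs `(c, ν)`. -/
def repeatEach : List (ℕ × ℕ) → List ℕ
  | [] => []
  | p :: r => List.replicate p.2 p.1 ++ repeatEach r

/-- The right endpoints `y_1 ≤ ⋯ ≤ y_{k-1}`: each block maximum `c_r` repeated
`ν_r` times, in increasing order. -/
def ysList (n : ℕ) (bs : Finset (Finset ℕ)) : List ℕ :=
  repeatEach (List.zip ((bs.image fmax).sort (· ≤ ·)) (nuList n bs))

/-- The left endpoints `x_1 < ⋯ < x_{k-1}`: the elements of `{1, …, n}` that are not
block maxima, in increasing order. -/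
def xsList (n : ℕ) (bs : Finset (Finset ℕ)) : List ℕ :=
  ((Finset.Icc 1 n).filter (fun i => i ∉ bs.image fmax)).sort (· ≤ ·)

/-- Greedy left-to-right selection of arcs: keep the first arc, and thereafter keep the
earliest arc whose left endpoint exceeds the right endpoint of the last kept arc. -/
def greedyArcs : List (ℕ × ℕ) → Option ℕ → List (ℕ × ℕ)
  | [], _ => []
  | a :: rest, none => a :: greedyArcs rest (some a.2)
  | a :: rest, some r =>
      if r < a.1 then a :: greedyArcs rest (some a.2) else greedyArcs rest (some r)

/-- The mingarc statistic: the sum of `n - y_i` over the greedily selected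
candidate arcs `[x_i, y_i]`. -/
def mingarc (n : ℕ) (bs : Finset (Finset ℕ)) : ℕ :=
  ((greedyArcs (List.zip (xsList n bs) (ysList n bs)) none).map (fun p => n - p.2)).sum

/-! ### The map η from polyominoes to noncrossing partitions -/

/-- Largest column index `i < m` with `colHeight lower i ≤ j`: the rightmost cell
adjacent to the floor in row `j`. -/
def eFloor {m k : ℕ} (P : Polyomino m k) (j : ℕ) : ℕ :=
  (((List.range m).filter (fun i => decide (colHeight P.lower i ≤ j))).getLastD 0)

/-- Smallest column index `i` with `colHeight upper i ≥ j + 1`: the leftmost cell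
adjacent to the ceiling in row `j` (with default `m - 1`). -/
def fCeil {m k : ℕ} (P : Polyomino m k) (j : ℕ) : ℕ :=
  (((List.range m).filter (fun i => decide (j + 1 ≤ colHeight P.upper i))).headD (m - 1))

/-- The number of cells adjacent to the ceiling in row `j`. -/
def rowCount {m k : ℕ} (P : Polyomino m k) (j : ℕ) : ℕ :=
  fCeil P (j + 1) - fCeil P j + 1

/-- Pick, `cnt` times, the largest label in `{1, …, L}` not used yet. -/
def pickRow : ℕ → ℕ → Finset ℕ → Finset ℕ
  | 0, _, _ => ∅
  | cnt + 1, L, used =>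
      let x := fmax ((Finset.Icc 1 L) \ used)
      insert x (pickRow cnt L (insert x used))

/-- The blocks of `η(P)`: label the cells adjacent to the floor `1, …, n` going bottom
to top, left to right (the label of the floor cell in column `i`, row `j` is
`i + j + 1`, and the labels present in rows `≤ j` are exactly `1, …, eFloor P j + j + 1`);
then going bottom to top, left to right over the cells adjacent to the ceiling, assign
to each the largest unused indexing label occurring in the same row or below; the
blocks are the label sets of the ceiling rows. -/
def etaBlocks {m k : ℕ} (P : Polyomino m k) : Finset (Finset ℕ) :=
  (((List.range k).foldl
      (fun st j =>
        let B := pickRow (rowCount P j) (eFloor P j + j + 1) st.1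
        (st.1 ∪ B, B :: st.2))
      ((∅ : Finset ℕ), ([] : List (Finset ℕ)))).2).toFinset

/-! A polyomino with three rows is determined by four coordinates of its two paths, and a
noncrossing partition of `{1, …, n}` with `n - 2` blocks by the four ends of two arcs, so both pairs
of statistics become explicit functions on sets of integer quadruples. Three families of quadruples
on the two sides correspond by affine substitutions. With `m = n - 2`, the remaining ones of leap,
or bounce, `ℓ` are parametrised by the cells `(k, t)` of the rectangle `[1, m - 1] × [ℓ, m]`, where
the skip, or area, is the taxicab distance to `(1, ℓ)`. The partitions cut this rectangle along the
lines `k = ℓ` and `k = t`, the polyominoes along `k = m - ℓ`. -/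

/-! ### Polyominoes with three rows -/

theorem mem_pathPts_nil (x y : ℕ) : (x, y) ∈ pathPts [] ↔ x = 0 ∧ y = 0 := by
  simp [pathPts, pathPos, countE, countN]

theorem pathPts_cons (s : Step) (w : List Step) :
    pathPts (s :: w) = insert (0, 0) ((pathPts w).image (pathPos [s] + ·)) := by
  have hpos (i : ℕ) : pathPos (s :: w.take i) = pathPos [s] + pathPos (w.take i) := by
    simp only [pathPos, countE, countN, ← List.singleton_append (l := w.take i),
      List.count_append]
    rfl
  rw [pathPts, List.length_cons, List.range_succ_eq_map, List.map_cons, List.toFinset_cons,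
    List.map_map]
  congr 1
  ext p
  simp [pathPts, hpos]

theorem mem_pathPts_east_cons (w : List Step) (x y : ℕ) :
    (x, y) ∈ pathPts (Step.E :: w) ↔ (x = 0 ∧ y = 0) ∨ (1 ≤ x ∧ (x - 1, y) ∈ pathPts w) := by
  have hstep : pathPos [Step.E] = (1, 0) := rfl
  cases x <;> simp [pathPts_cons, hstep, Nat.add_comm 1]

theorem mem_pathPts_north_cons (w : List Step) (x y : ℕ) :
    (x, y) ∈ pathPts (Step.N :: w) ↔ (x = 0 ∧ y = 0) ∨ (1 ≤ y ∧ (x, y - 1) ∈ pathPts w) := by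
  have hstep : pathPos [Step.N] = (0, 1) := rfl
  cases y <;> simp [pathPts_cons, hstep, Nat.add_comm 1]

theorem mem_pathPts_replicate_append (k : ℕ) (w : List Step) (x y : ℕ) :
    (x, y) ∈ pathPts (List.replicate k Step.E ++ w) ↔
      (x < k ∧ y = 0) ∨ (k ≤ x ∧ (x - k, y) ∈ pathPts w) := by
  induction k generalizing x with
  | zero => simp
  | succ k ih =>
    rw [List.replicate_succ, List.cons_append, mem_pathPts_east_cons, ih, Nat.sub_sub,
      Nat.add_comm 1 k]
    cases x with
    | zero => simp
    | succ x => simp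

theorem getD_colHeightsAux_replicate_append (k : ℕ) (w : List Step) (h i : ℕ) :
    (colHeightsAux (List.replicate k Step.E ++ w) h).getD i 0 =
      if i < k then h else (colHeightsAux w h).getD (i - k) 0 := by
  induction k generalizing i with
  | zero => simp
  | succ k ih =>
    rw [List.replicate_succ, List.cons_append, colHeightsAux]
    cases i with
    | zero => simp
    | succ i => rw [List.getD_cons_succ, ih]; simp

theorem exists_eq_replicate_append_north {w : List Step} {k : ℕ} (h : countN w = k + 1) :
    ∃ a v, w = List.replicate a Step.E ++ Step.N :: v ∧ countN v = k := by
  induction w with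
  | nil => simp [countN] at h
  | cons s w ih =>
    cases s with
    | N => exact ⟨0, w, rfl, by simpa [countN] using h⟩
    | E =>
      obtain ⟨a, v, rfl, hv⟩ := ih (by simpa [countN] using h)
      exact ⟨a + 1, v, rfl, hv⟩

theorem eq_replicate_of_countN_eq_zero {w : List Step} (h : countN w = 0) :
    w = List.replicate w.length Step.E := by
  refine List.eq_replicate_iff.2 ⟨rfl, fun s hs => ?_⟩
  cases s with
  | E => rfl
  | N => exact absurd hs (List.count_eq_zero.1 h)

/-- The lattice path from the origin to `(m, 3)` whose north steps have abscissas `p ≤ q ≤ r`. -/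
def threeNorthPath (m p q r : ℕ) : List Step :=
  List.replicate p Step.E ++ Step.N :: (List.replicate (q - p) Step.E ++
    Step.N :: (List.replicate (r - q) Step.E ++ Step.N :: List.replicate (m - r) Step.E))

theorem countN_threeNorthPath (m p q r : ℕ) : countN (threeNorthPath m p q r) = 3 := by
  simp [threeNorthPath, countN, List.count_append, List.count_replicate]

theorem exists_eq_threeNorthPath {w : List Step} (hN : countN w = 3) :
    ∃ p q r, p ≤ q ∧ q ≤ r ∧ r ≤ countE w ∧ w = threeNorthPath (countE w) p q r := by
  obtain ⟨a, w₁, rfl, hw₁⟩ := exists_eq_replicate_append_north hN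
  obtain ⟨b, w₂, rfl, hw₂⟩ := exists_eq_replicate_append_north hw₁
  obtain ⟨c, w₃, rfl, hw₃⟩ := exists_eq_replicate_append_north hw₂
  obtain ⟨d, rfl⟩ : ∃ d, w₃ = List.replicate d Step.E := ⟨_, eq_replicate_of_countN_eq_zero hw₃⟩
  refine ⟨a, a + b, a + b + c, ?_⟩
  simp [threeNorthPath, countE, List.count_append, ← Nat.add_assoc]

section ThreeNorthPath

variable {m p q r : ℕ}

theorem countE_threeNorthPath (hpq : p ≤ q) (hqr : q ≤ r) (hrm : r ≤ m) :
    countE (threeNorthPath m p q r) = m := by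
  simp only [threeNorthPath, countE, List.count_append, List.count_replicate_self, ne_eq,
    reduceCtorEq, not_false_eq_true, List.count_cons_of_ne]
  omega

theorem mem_pathPts_threeNorthPath (hpq : p ≤ q) (hqr : q ≤ r) (hrm : r ≤ m) (x y : ℕ) :
    (x, y) ∈ pathPts (threeNorthPath m p q r) ↔
      (y = 0 ∧ x ≤ p) ∨ (y = 1 ∧ p ≤ x ∧ x ≤ q) ∨ (y = 2 ∧ q ≤ x ∧ x ≤ r) ∨
      (y = 3 ∧ r ≤ x ∧ x ≤ m) := by
  rw [threeNorthPath, ← List.append_nil (List.replicate (m - r) Step.E)]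
  simp only [mem_pathPts_replicate_append, mem_pathPts_north_cons, mem_pathPts_nil]
  omega

theorem colHeight_threeNorthPath (hpq : p ≤ q) (hqr : q ≤ r) {i : ℕ} (hi : i < m) :
    colHeight (threeNorthPath m p q r) i =
      (if p ≤ i then 1 else 0) + (if q ≤ i then 1 else 0) + (if r ≤ i then 1 else 0) := by
  rw [colHeight, threeNorthPath, ← List.append_nil (List.replicate (m - r) Step.E)]
  simp only [getD_colHeightsAux_replicate_append, colHeightsAux]
  split_ifs <;> omega

theorem sum_range_ite_le (m p : ℕ) :
    ∑ i ∈ Finset.range m, (if p ≤ i then 1 else 0) = m - p := by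
  induction m with
  | zero => simp
  | succ m ih => rw [Finset.sum_range_succ, ih]; split <;> omega

theorem sum_colHeight_threeNorthPath (hpq : p ≤ q) (hqr : q ≤ r) :
    ∑ i ∈ Finset.range m, colHeight (threeNorthPath m p q r) i = (m - p) + (m - q) + (m - r) := by
  rw [Finset.sum_congr rfl fun i hi => colHeight_threeNorthPath hpq hqr (Finset.mem_range.1 hi)]
  simp only [Finset.sum_add_distrib, sum_range_ite_le]

theorem le_of_colHeight_threeNorthPath_le {p' q' r' : ℕ} (hpq : p ≤ q) (hqr : q ≤ r)
    (hpq' : p' ≤ q') (hqr' : q' ≤ r') (hrm' : r' ≤ m)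
    (h : ∀ i < m, colHeight (threeNorthPath m p q r) i ≤ colHeight (threeNorthPath m p' q' r') i) :
    p' ≤ p ∧ q' ≤ q ∧ r' ≤ r := by
  have hcount i (hi : i < m) := h i hi
  simp +contextual only [colHeight_threeNorthPath hpq hqr, colHeight_threeNorthPath hpq' hqr']
    at hcount
  refine ⟨?_, ?_, ?_⟩ <;> by_contra! hlt
  · have := hcount p (by omega)
    split_ifs at this <;> omega
  · have := hcount q (by omega)
    split_ifs at this <;> omega
  · have := hcount r (by omega)
    split_ifs at this <;> omega

end ThreeNorthPath

/-- The free coordinates of a parallelogram polyomino of size `m × 3`: the north steps of the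
upper path have abscissas `0, u₂, u₃` and those of the lower path have abscissas `l₁, l₂, m`, so
that the rows of the polyomino are the intervals `[0, l₁]`, `[u₂, l₂]` and `[u₃, m]`. -/
@[ext]
structure ThreeRow (m : ℕ) where
  u₂ : ℕ
  u₃ : ℕ
  l₁ : ℕ
  l₂ : ℕ
  u₂_le_u₃ : u₂ ≤ u₃
  u₂_lt_l₁ : u₂ < l₁
  u₃_lt_l₂ : u₃ < l₂
  l₁_le_l₂ : l₁ ≤ l₂
  l₂_le : l₂ ≤ m

namespace ThreeRow

variable {m : ℕ}

/-- The upper path of the polyomino with coordinates `T`. -/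
def upper (T : ThreeRow m) : List Step := threeNorthPath m 0 T.u₂ T.u₃

/-- The lower path of the polyomino with coordinates `T`. -/
def lower (T : ThreeRow m) : List Step := threeNorthPath m T.l₁ T.l₂ m

/-- The area statistic in terms of the coordinates; see `area_toPolyomino`. -/
def area (T : ThreeRow m) : ℕ := T.l₁ + T.l₂ - T.u₂ - T.u₃ - 2

/-- The bounce statistic in terms of the coordinates; see `bounce_toPolyomino`. The cases are
distinguished by the heights of the first two north runs of the bounce path. -/
def bounce (T : ThreeRow m) : ℕ :=
  if T.u₂ = 0 then (if T.u₃ = 0 then 0 else 1 + m - T.l₂)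
  else if T.u₃ < T.l₁ then 2 + m - T.l₁ else 3 + 2 * m - T.l₁ - T.l₂

theorem u₃_le (T : ThreeRow m) : T.u₃ ≤ m := T.u₃_lt_l₂.le.trans T.l₂_le

theorem colHeight_upper (T : ThreeRow m) {i : ℕ} (hi : i < m) :
    colHeight T.upper i = 1 + (if T.u₂ ≤ i then 1 else 0) + (if T.u₃ ≤ i then 1 else 0) := by
  rw [upper, colHeight_threeNorthPath (Nat.zero_le _) T.u₂_le_u₃ hi, if_pos (Nat.zero_le i)]

theorem colHeight_lower (T : ThreeRow m) {i : ℕ} (hi : i < m) :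
    colHeight T.lower i = (if T.l₁ ≤ i then 1 else 0) + (if T.l₂ ≤ i then 1 else 0) := by
  rw [lower, colHeight_threeNorthPath T.l₁_le_l₂ T.l₂_le hi, if_neg hi.not_ge, Nat.add_zero]

theorem colHeight_lower_le_upper (T : ThreeRow m) {i : ℕ} (hi : i < m) :
    colHeight T.lower i ≤ colHeight T.upper i := by
  have := T.u₂_lt_l₁
  have := T.u₃_lt_l₂
  rw [T.colHeight_lower hi, T.colHeight_upper hi]
  split_ifs <;> omega

theorem mem_pathPts_upper (T : ThreeRow m) (x y : ℕ) :
    (x, y) ∈ pathPts T.upper ↔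
      (y = 0 ∧ x ≤ 0) ∨ (y = 1 ∧ 0 ≤ x ∧ x ≤ T.u₂) ∨ (y = 2 ∧ T.u₂ ≤ x ∧ x ≤ T.u₃) ∨
      (y = 3 ∧ T.u₃ ≤ x ∧ x ≤ m) :=
  mem_pathPts_threeNorthPath (Nat.zero_le _) T.u₂_le_u₃ T.u₃_le x y

theorem mem_pathPts_lower (T : ThreeRow m) (x y : ℕ) :
    (x, y) ∈ pathPts T.lower ↔
      (y = 0 ∧ x ≤ T.l₁) ∨ (y = 1 ∧ T.l₁ ≤ x ∧ x ≤ T.l₂) ∨ (y = 2 ∧ T.l₂ ≤ x ∧ x ≤ m) ∨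
      (y = 3 ∧ m ≤ x ∧ x ≤ m) :=
  mem_pathPts_threeNorthPath T.l₁_le_l₂ T.l₂_le le_rfl x y

theorem pathPts_upper_inter_lower (T : ThreeRow m) :
    pathPts T.upper ∩ pathPts T.lower = {(0, 0), (m, 3)} := by
  ext ⟨x, y⟩
  have := T.u₂_lt_l₁
  have := T.u₃_lt_l₂
  have := T.u₃_le
  rw [Finset.mem_inter, mem_pathPts_upper, mem_pathPts_lower]
  simp only [Finset.mem_insert, Finset.mem_singleton, Prod.mk.injEq]
  omega

/-- The parallelogram polyomino with coordinates `T`. -/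
def toPolyomino (T : ThreeRow m) : Polyomino m 3 where
  lower := T.lower
  upper := T.upper
  lowerE := countE_threeNorthPath T.l₁_le_l₂ T.l₂_le le_rfl
  lowerN := countN_threeNorthPath _ _ _ _
  upperE := countE_threeNorthPath (Nat.zero_le _) T.u₂_le_u₃ T.u₃_le
  upperN := countN_threeNorthPath _ _ _ _
  above _ := T.colHeight_lower_le_upper
  meet := T.pathPts_upper_inter_lower

theorem area_toPolyomino (T : ThreeRow m) : QtN.area T.toPolyomino = T.area := by
  have hsum : ∑ i ∈ Finset.range m, (colHeight T.upper i - colHeight T.lower i) =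
      (m - 0) + (m - T.u₂) + (m - T.u₃) - ((m - T.l₁) + (m - T.l₂) + (m - m)) := by
    rw [Finset.sum_tsub_distrib _ fun i hi => T.colHeight_lower_le_upper (Finset.mem_range.1 hi),
      upper, lower, sum_colHeight_threeNorthPath (Nat.zero_le _) T.u₂_le_u₃,
      sum_colHeight_threeNorthPath T.l₁_le_l₂ T.l₂_le]
  have := T.u₂_lt_l₁
  have := T.u₃_lt_l₂
  have := T.l₁_le_l₂
  have := T.l₂_le
  rw [QtN.area, toPolyomino, hsum, area]
  omega

theorem toPolyomino_injective : Function.Injective (toPolyomino (m := m)) := by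
  intro T T' h
  have hU x y : (x, y) ∈ pathPts T.upper ↔ (x, y) ∈ pathPts T'.upper := by
    rw [show T.upper = T'.upper from congrArg Polyomino.upper h]
  have hL x y : (x, y) ∈ pathPts T.lower ↔ (x, y) ∈ pathPts T'.lower := by
    rw [show T.lower = T'.lower from congrArg Polyomino.lower h]
  simp only [mem_pathPts_upper] at hU
  simp only [mem_pathPts_lower] at hL
  ext
  · have := hU T.u₂ 1
    have := hU T'.u₂ 1
    omega
  · have := hU T.u₃ 2
    have := hU T'.u₃ 2
    have := T.u₂_le_u₃
    have := T'.u₂_le_u₃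
    omega
  · have := hL T.l₁ 0
    have := hL T'.l₁ 0
    omega
  · have := hL T.l₂ 1
    have := hL T'.l₂ 1
    have := T.l₁_le_l₂
    have := T'.l₁_le_l₂
    omega

theorem toPolyomino_surjective : Function.Surjective (toPolyomino (m := m)) := by
  rintro ⟨L, U, hLE, hLN, hUE, hUN, above, meet⟩
  obtain ⟨l₁, l₂, l₃, hl₁₂, hl₂₃, hl₃, hL⟩ := exists_eq_threeNorthPath hLN
  obtain ⟨u₁, u₂, u₃, hu₁₂, hu₂₃, hu₃, hU⟩ := exists_eq_threeNorthPath hUN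
  rw [hLE] at hL hl₃
  rw [hUE] at hU hu₃
  subst hL hU
  have hmeet x y := Finset.ext_iff.1 meet (x, y)
  simp only [Finset.mem_inter, mem_pathPts_threeNorthPath hl₁₂ hl₂₃ hl₃,
    mem_pathPts_threeNorthPath hu₁₂ hu₂₃ hu₃, Finset.mem_insert, Finset.mem_singleton,
    Prod.mk.injEq] at hmeet
  obtain ⟨h₁, h₂, h₃⟩ := le_of_colHeight_threeNorthPath_le hl₁₂ hl₂₃ hu₁₂ hu₂₃ hu₃ above
  obtain rfl : u₁ = 0 := by
    have := hmeet u₁ 0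
    omega
  obtain rfl : l₃ = m := by
    have := hmeet l₃ 3
    omega
  have hrow₁₂ : u₂ < l₁ := by
    by_contra!
    have := hmeet l₁ 1
    omega
  have hrow₂₃ : u₃ < l₂ := by
    by_contra!
    have := hmeet l₂ 2
    omega
  exact ⟨⟨u₂, u₃, l₁, l₂, hu₂₃, hrow₁₂, hrow₂₃, hl₁₂, hl₂₃⟩, rfl⟩

theorem toPolyomino_bijective : Function.Bijective (toPolyomino (m := m)) :=
  ⟨toPolyomino_injective, toPolyomino_surjective⟩

end ThreeRow

section BouncePath

variable {hU hL : ℕ → ℕ} {m n x y : ℕ}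

theorem eastTarget_eq {c : ℕ} (hxc : x ≤ c) (hcm : c ≤ m) (h : ∀ i < m, y ≤ hL i ↔ c ≤ i) :
    eastTarget hL m x y = c := by
  rw [eastTarget, List.headD_eq_head?_getD, List.head?_filter]
  rcases hcm.lt_or_eq with hlt | rfl
  · have hfind : (List.range m).find? (fun i => decide (x ≤ i ∧ y ≤ hL i)) = some c := by
      rw [List.find?_range_eq_some]
      refine ⟨by simp [hxc, h c hlt], List.mem_range.2 hlt, fun j hj => ?_⟩
      simp [h j (hj.trans hlt), hj]
    rw [hfind, Option.getD_some]
  · have hfind : (List.range c).find? (fun i => decide (x ≤ i ∧ y ≤ hL i)) = none := by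
      rw [List.find?_eq_none]
      intro j hj
      simp [h j (List.mem_range.1 hj), List.mem_range.1 hj]
    rw [hfind, Option.getD_none]

theorem bounceAux_endpoint (fuel j : ℕ) : bounceAux hU hL m n fuel m n j = 0 := by
  cases fuel <;> simp [bounceAux]

theorem bounceAux_last (fuel j : ℕ) (hy : y ≠ n) (htop : hU (x - 1) = n) :
    bounceAux hU hL m n (fuel + 1) x y j = (j + 1) * ((n - y) + (m - x)) := by
  rw [bounceAux, if_neg fun h => hy h.2]
  simp only [htop, if_true, bounceAux_endpoint, Nat.add_zero]

theorem bounceAux_step (fuel j : ℕ) {y' x' : ℕ} (hy : y ≠ n) (hup : hU (x - 1) = y')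
    (hy' : y' ≠ n) (hright : eastTarget hL m x y' = x') :
    bounceAux hU hL m n (fuel + 1) x y j =
      (j + 1) * ((y' - y) + (x' - x)) + bounceAux hU hL m n fuel x' y' (j + 1) := by
  rw [bounceAux, if_neg fun h => hy h.2]
  simp only [hup, if_neg hy', hright]

end BouncePath

namespace ThreeRow

variable {m : ℕ}

theorem eastTarget_lower_one (T : ThreeRow m) {x : ℕ} (hx : x ≤ T.l₁) :
    eastTarget (colHeight T.lower) m x 1 = T.l₁ := by
  have := T.l₁_le_l₂
  refine eastTarget_eq hx (T.l₁_le_l₂.trans T.l₂_le) fun i hi => ?_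
  rw [T.colHeight_lower hi]
  split_ifs <;> omega

theorem eastTarget_lower_two (T : ThreeRow m) {x : ℕ} (hx : x ≤ T.l₂) :
    eastTarget (colHeight T.lower) m x 2 = T.l₂ := by
  have := T.l₁_le_l₂
  refine eastTarget_eq hx T.l₂_le fun i hi => ?_
  rw [T.colHeight_lower hi]
  split_ifs <;> omega

theorem colHeight_upper_eq_one (T : ThreeRow m) {i : ℕ} (hi : i < T.u₂) :
    colHeight T.upper i = 1 := by
  have := T.u₂_le_u₃
  have := T.u₃_le
  rw [T.colHeight_upper (by omega), if_neg (by omega), if_neg (by omega)]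

theorem colHeight_upper_eq_two (T : ThreeRow m) {i : ℕ} (h₂ : T.u₂ ≤ i) (h₃ : i < T.u₃) :
    colHeight T.upper i = 2 := by
  have := T.u₃_le
  rw [T.colHeight_upper (by omega), if_pos h₂, if_neg (by omega)]

theorem colHeight_upper_eq_three (T : ThreeRow m) {i : ℕ} (h₃ : T.u₃ ≤ i) (hi : i < m) :
    colHeight T.upper i = 3 := by
  rw [T.colHeight_upper hi, if_pos (T.u₂_le_u₃.trans h₃), if_pos h₃]

theorem bounce_toPolyomino (T : ThreeRow m) : QtN.bounce T.toPolyomino = T.bounce := by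
  have h₁ := T.u₂_lt_l₁
  have h₂ := T.u₃_lt_l₂
  have h₃ := T.l₁_le_l₂
  have h₄ := T.l₂_le
  have hlast : colHeight T.upper (T.l₂ - 1) = 3 :=
    T.colHeight_upper_eq_three (by omega) (by omega)
  change bounceAux (colHeight T.upper) (colHeight T.lower) m 3 (m + 3 + 2) 1 0 0 - (m + 3 - 1) =
    T.bounce
  rw [bounce]
  split_ifs with hu₂ hu₃ hrow
  · have hup : colHeight T.upper (1 - 1) = 3 := T.colHeight_upper_eq_three (by omega) (by omega)
    rw [bounceAux_last _ _ (by omega) hup]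
    omega
  · have hup : colHeight T.upper (1 - 1) = 2 := T.colHeight_upper_eq_two (by omega) (by omega)
    rw [bounceAux_step _ _ (by omega) hup (by omega) (T.eastTarget_lower_two (by omega)),
      bounceAux_last _ _ (by omega) hlast]
    omega
  · have hup : colHeight T.upper (1 - 1) = 1 := T.colHeight_upper_eq_one (by omega)
    have hup' : colHeight T.upper (T.l₁ - 1) = 3 :=
      T.colHeight_upper_eq_three (by omega) (by omega)
    rw [bounceAux_step _ _ (by omega) hup (by omega) (T.eastTarget_lower_one (by omega)),
      bounceAux_last _ _ (by omega) hup']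
    omega
  · have hup : colHeight T.upper (1 - 1) = 1 := T.colHeight_upper_eq_one (by omega)
    have hup' : colHeight T.upper (T.l₁ - 1) = 2 :=
      T.colHeight_upper_eq_two (by omega) (by omega)
    rw [bounceAux_step _ _ (by omega) hup (by omega) (T.eastTarget_lower_one (by omega)),
      bounceAux_step _ _ (by omega) hup' (by omega) (T.eastTarget_lower_two (by omega)),
      bounceAux_last _ _ (by omega) hlast]
    omega

end ThreeRow

/-! ### Noncrossing partitions as pairs of arcs -/

theorem fmin_eq {s : Finset ℕ} {x : ℕ} (hx : x ∈ s) (h : ∀ y ∈ s, x ≤ y) : fmin s = x := by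
  rw [fmin, dif_pos ⟨x, hx⟩]
  exact (Finset.min'_eq_iff _ _ _).2 ⟨hx, h⟩

theorem fmax_eq {s : Finset ℕ} {x : ℕ} (hx : x ∈ s) (h : ∀ y ∈ s, y ≤ x) : fmax s = x :=
  le_antisymm (Finset.sup_le h) (Finset.le_sup (f := id) hx)

section NsBlocks

variable (bs : Finset (Finset ℕ))

theorem nsBlocks_nsBlocks : nsBlocks (nsBlocks bs) = nsBlocks bs := by
  simp only [nsBlocks, Finset.filter_filter, and_self]

theorem blockQuad_nsBlocks : blockQuad (nsBlocks bs) = blockQuad bs := by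
  simp only [blockQuad, nsBlocks_nsBlocks]

theorem isNoncrossing_nsBlocks_iff : IsNoncrossing (nsBlocks bs) ↔ IsNoncrossing bs := by
  have two_le {β : Finset ℕ} {i j : ℕ} (hi : i ∈ β) (hj : j ∈ β) (hij : i < j) : 2 ≤ β.card :=
    Finset.one_lt_card.2 ⟨i, hi, j, hj, hij.ne⟩
  constructor
  · intro h a b c d hab hbc hcd β hβ γ hγ ha hc hb hd
    exact h a b c d hab hbc hcd
      β (Finset.mem_filter.2 ⟨hβ, two_le ha hc (hab.trans hbc)⟩)
      γ (Finset.mem_filter.2 ⟨hγ, two_le hb hd (hbc.trans hcd)⟩) ha hc hb hd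
  · intro h a b c d hab hbc hcd β hβ γ hγ
    exact h a b c d hab hbc hcd β (Finset.mem_filter.1 hβ).1 γ (Finset.mem_filter.1 hγ).1

end NsBlocks

/-- The families of subsets of `{1, …, n}` that are the non-singleton blocks of a set partition;
see `bigBlocks_nsBlocks` and `nsBlocks_completion`. -/
structure BigBlocks (n : ℕ) (T : Finset (Finset ℕ)) : Prop where
  two_le_card : ∀ β ∈ T, 2 ≤ β.card
  subset_Icc : ∀ β ∈ T, β ⊆ Finset.Icc 1 n
  disjoint : ∀ β ∈ T, ∀ γ ∈ T, β ≠ γ → Disjoint β γ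

namespace SetPartition

variable {n : ℕ}

theorem subset_Icc (P : SetPartition n) {β : Finset ℕ} (hβ : β ∈ P.blocks) :
    β ⊆ Finset.Icc 1 n :=
  fun i hi => (P.cover i).2 ⟨β, hβ, hi⟩

theorem bigBlocks_nsBlocks (P : SetPartition n) : BigBlocks n (nsBlocks P.blocks) where
  two_le_card _ hβ := (Finset.mem_filter.1 hβ).2
  subset_Icc _ hβ := P.subset_Icc (Finset.mem_filter.1 hβ).1
  disjoint β hβ γ hγ := P.disjoint β (Finset.mem_filter.1 hβ).1 γ (Finset.mem_filter.1 hγ).1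

theorem card_pos (P : SetPartition n) {β : Finset ℕ} (hβ : β ∈ P.blocks) : 0 < β.card :=
  Finset.card_pos.2 (Finset.nonempty_iff_ne_empty.2 fun h => P.not_empty_mem (h ▸ hβ))

theorem eq_of_mem (P : SetPartition n) {β γ : Finset ℕ} {i : ℕ} (hβ : β ∈ P.blocks)
    (hγ : γ ∈ P.blocks) (hiβ : i ∈ β) (hiγ : i ∈ γ) : β = γ := by
  by_contra hne
  exact Finset.disjoint_left.1 (P.disjoint β hβ γ hγ hne) hiβ hiγ

theorem mem_nsBlocks_or_eq_singleton (P : SetPartition n) {β : Finset ℕ} (hβ : β ∈ P.blocks) :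
    β ∈ nsBlocks P.blocks ∨ ∃ i, β = {i} := by
  have := P.card_pos hβ
  rcases Nat.lt_or_ge β.card 2 with h | h
  · exact .inr (Finset.card_eq_one.1 (by omega))
  · exact .inl (Finset.mem_filter.2 ⟨hβ, h⟩)

theorem sum_nsBlocks (P : SetPartition n) {f : Finset ℕ → ℕ} (hf : ∀ i, f {i} = 0) :
    ∑ β ∈ nsBlocks P.blocks, f β = ∑ β ∈ P.blocks, f β := by
  refine Finset.sum_subset (Finset.filter_subset _ _) fun β hβ hβ' => ?_
  obtain ⟨i, rfl⟩ := (P.mem_nsBlocks_or_eq_singleton hβ).resolve_left hβ'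
  exact hf i

theorem skip_nsBlocks (P : SetPartition n) : skip (nsBlocks P.blocks) = skip P.blocks := by
  refine P.sum_nsBlocks fun i => ?_
  rw [fmax_eq (x := i) (by simp) (by simp), fmin_eq (x := i) (by simp) (by simp),
    Finset.card_singleton]
  omega

theorem sum_card_blocks (P : SetPartition n) : ∑ β ∈ P.blocks, β.card = n := by
  have hunion : P.blocks.biUnion id = Finset.Icc 1 n := by
    ext i
    rw [Finset.mem_biUnion, P.cover]
    rfl
  calc ∑ β ∈ P.blocks, β.card = (P.blocks.biUnion id).card :=
        (Finset.card_biUnion P.disjoint).symm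
    _ = n := by rw [hunion, Nat.card_Icc, Nat.add_sub_cancel]

theorem card_blocks_add_sum_nsBlocks (P : SetPartition n) :
    P.blocks.card + ∑ β ∈ nsBlocks P.blocks, (β.card - 1) = n := by
  rw [P.sum_nsBlocks (f := fun β => β.card - 1) fun i => by simp, Finset.card_eq_sum_ones,
    ← Finset.sum_add_distrib]
  exact (Finset.sum_congr rfl fun β hβ => Nat.add_sub_cancel' (P.card_pos hβ)).trans
    P.sum_card_blocks

theorem mem_blocks_iff (P : SetPartition n) (β : Finset ℕ) :
    β ∈ P.blocks ↔ β ∈ nsBlocks P.blocks ∨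
      ∃ i ∈ Finset.Icc 1 n, (∀ γ ∈ nsBlocks P.blocks, i ∉ γ) ∧ β = {i} := by
  constructor
  · intro hβ
    rcases P.mem_nsBlocks_or_eq_singleton hβ with h | ⟨i, rfl⟩
    · exact .inl h
    refine .inr ⟨i, P.subset_Icc hβ (Finset.mem_singleton_self i), fun γ hγ hi => ?_, rfl⟩
    obtain ⟨hγP, hγ₂⟩ := Finset.mem_filter.1 hγ
    obtain rfl := P.eq_of_mem hβ hγP (Finset.mem_singleton_self i) hi
    simp at hγ₂
  · rintro (h | ⟨i, hi, hns, rfl⟩)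
    · exact (Finset.mem_filter.1 h).1
    · obtain ⟨γ, hγ, hiγ⟩ := (P.cover i).1 hi
      obtain ⟨j, rfl⟩ := (P.mem_nsBlocks_or_eq_singleton hγ).resolve_left fun h => hns γ h hiγ
      obtain rfl := Finset.mem_singleton.1 hiγ
      exact hγ

theorem ext_nsBlocks {P Q : SetPartition n} (h : nsBlocks P.blocks = nsBlocks Q.blocks) :
    P = Q := by
  have hblocks : P.blocks = Q.blocks := by
    ext β
    rw [P.mem_blocks_iff, Q.mem_blocks_iff, h]
  cases P
  cases Q
  congr

end SetPartition

namespace BigBlocks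

variable {n : ℕ} {T : Finset (Finset ℕ)}

/-- The set partition obtained from a family of blocks by adding the uncovered points as
singletons. -/
def completion (h : BigBlocks n T) : SetPartition n where
  blocks := T ∪ ((Finset.Icc 1 n).filter fun i => ∀ γ ∈ T, i ∉ γ).image ({·})
  not_empty_mem := by
    simp only [Finset.mem_union, Finset.mem_image, Finset.singleton_ne_empty, and_false,
      exists_false, or_false]
    intro h₀
    simpa using h.two_le_card ∅ h₀
  cover i := by
    constructor
    · intro hi
      by_cases hT : ∃ γ ∈ T, i ∈ γ
      · obtain ⟨γ, hγ, hiγ⟩ := hT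
        exact ⟨γ, Finset.mem_union_left _ hγ, hiγ⟩
      · push Not at hT
        exact ⟨{i}, Finset.mem_union_right _ (Finset.mem_image_of_mem _
          (Finset.mem_filter.2 ⟨hi, hT⟩)), Finset.mem_singleton_self i⟩
    · simp only [Finset.mem_union, Finset.mem_image, Finset.mem_filter]
      rintro ⟨_, hβ | ⟨j, ⟨hj, -⟩, rfl⟩, hi⟩
      · exact h.subset_Icc _ hβ hi
      · rwa [Finset.mem_singleton.1 hi]
  disjoint := by
    simp only [Finset.mem_union, Finset.mem_image, Finset.mem_filter]
    rintro _ (hβ | ⟨j, ⟨-, hj⟩, rfl⟩) _ (hγ | ⟨k, ⟨-, hk⟩, rfl⟩) hne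
    · exact h.disjoint _ hβ _ hγ hne
    · exact Finset.disjoint_singleton_right.2 (hk _ hβ)
    · exact Finset.disjoint_singleton_left.2 (hj _ hγ)
    · exact Finset.disjoint_singleton.2 fun hjk => hne (congrArg _ hjk)

theorem nsBlocks_completion (h : BigBlocks n T) : nsBlocks h.completion.blocks = T := by
  rw [nsBlocks, completion, Finset.filter_union, Finset.filter_true_of_mem h.two_le_card,
    Finset.filter_false_of_mem, Finset.union_empty]
  rw [Finset.forall_mem_image]
  intro i _
  rw [Finset.card_singleton]
  decide

end BigBlocks

section LinearOrder

variable {α : Type*} [LinearOrder α] {s : Finset α}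

theorem exists_lt_of_card_eq_two (hs : s.card = 2) : ∃ a b, a < b ∧ s = {a, b} := by
  obtain ⟨a, b, hne, rfl⟩ := Finset.card_eq_two.1 hs
  rcases hne.lt_or_gt with h | h
  · exact ⟨a, b, h, rfl⟩
  · exact ⟨b, a, h, Finset.pair_comm a b⟩

theorem exists_lt_lt_of_card_eq_three (hs : s.card = 3) :
    ∃ a b c, a < b ∧ b < c ∧ s = {a, b, c} := by
  have hne : s.Nonempty := Finset.card_pos.1 (by omega)
  have hmin := s.min'_mem hne
  obtain ⟨b, c, hbc, herase⟩ := exists_lt_of_card_eq_two (s := s.erase (s.min' hne))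
    (by rw [Finset.card_erase_of_mem hmin, hs])
  have hb : b ∈ s.erase (s.min' hne) := by rw [herase]; exact Finset.mem_insert_self b {c}
  exact ⟨s.min' hne, b, c, Finset.min'_lt_of_mem_erase_min' s hne hb, hbc, by
    rw [← herase, Finset.insert_erase hmin]⟩

end LinearOrder

section OneTriple

variable {n a b c : ℕ}

theorem card_triple (hab : a < b) (hbc : b < c) : ({a, b, c} : Finset ℕ).card = 3 :=
  Finset.card_eq_three.2 ⟨a, b, c, hab.ne, (hab.trans hbc).ne, hbc.ne, rfl⟩

theorem bigBlocks_triple_iff (hab : a < b) (hbc : b < c) :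
    BigBlocks n {{a, b, c}} ↔ 1 ≤ a ∧ c ≤ n := by
  constructor
  · intro h
    have hsub := h.subset_Icc _ (Finset.mem_singleton_self _)
    exact ⟨(Finset.mem_Icc.1 (hsub (by simp : a ∈ _))).1,
      (Finset.mem_Icc.1 (hsub (by simp : c ∈ _))).2⟩
  · rintro ⟨ha, hc⟩
    constructor
    · simp [card_triple hab hbc]
    · grind
    · simp

theorem skip_triple (hab : a < b) (hbc : b < c) : skip {{a, b, c}} = c - a - 2 := by
  rw [skip, Finset.sum_singleton, card_triple hab hbc, fmax_eq (x := c) (by simp) (by grind),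
    fmin_eq (x := a) (by simp) (by grind)]
  omega

theorem blockQuad_triple (hab : a < b) (hbc : b < c) :
    blockQuad {{a, b, c}} = (a, b, b, c) := by
  have hns : nsBlocks {{a, b, c}} = {{a, b, c}} :=
    Finset.filter_true_of_mem (by simp [card_triple hab hbc])
  have hmin : fmin {a, b, c} = a := fmin_eq (by simp) (by grind)
  have hcontaining : blockContaining {{a, b, c}} a = {a, b, c} := by
    rw [blockContaining, Finset.filter_true_of_mem (by simp), Finset.sup_singleton, id]
  have hsort : ({a, b, c} : Finset ℕ).sort (· ≤ ·) = [a, b, c] := by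
    rw [Finset.sort_insert _ (by grind) (by grind), Finset.sort_insert _ (by grind) (by grind),
      Finset.sort_singleton]
  simp [blockQuad, hns, hmin, hcontaining, hsort]

end OneTriple

section TwoPairs

variable {n a b c d : ℕ}

theorem fmin_pair (hab : a < b) : fmin {a, b} = a :=
  fmin_eq (by simp) (by grind)

theorem fmax_pair (hab : a < b) : fmax {a, b} = b :=
  fmax_eq (by simp) (by grind)

theorem pair_ne_pair (hac : a < c) (hcd : c < d) : ({a, b} : Finset ℕ) ≠ {c, d} := fun h => by
  have : a ∈ ({c, d} : Finset ℕ) := h ▸ Finset.mem_insert_self a {b}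
  simp only [Finset.mem_insert, Finset.mem_singleton] at this
  omega

theorem isNoncrossing_pairs_iff (hac : a < c) (hcd : c < d) :
    IsNoncrossing {{a, b}, {c, d}} ↔ b ≤ c ∨ d ≤ b := by
  constructor
  · intro h
    by_contra! hcross
    exact pair_ne_pair hac hcd
      (h a c b d hac hcross.1 hcross.2 {a, b} (by simp) {c, d} (by simp) (by simp) (by simp)
        (by simp) (by simp))
  · simp only [IsNoncrossing, Finset.mem_insert, Finset.mem_singleton]
    rintro h i j k l hij hjk hkl _ (rfl | rfl) _ (rfl | rfl) <;>
      simp only [Finset.mem_insert, Finset.mem_singleton] <;> omega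

theorem bigBlocks_pairs_iff (hab : a < b) (hac : a < c) (hcd : c < d) :
    BigBlocks n {{a, b}, {c, d}} ↔ 1 ≤ a ∧ b ≤ n ∧ d ≤ n ∧ b ≠ c ∧ b ≠ d := by
  constructor
  · intro h
    have hsub₁ := h.subset_Icc {a, b} (by simp)
    have hsub₂ := h.subset_Icc {c, d} (by simp)
    have hdisj := h.disjoint {a, b} (by simp) {c, d} (by simp) (pair_ne_pair hac hcd)
    simp only [Finset.insert_subset_iff, Finset.singleton_subset_iff, Finset.mem_Icc] at hsub₁ hsub₂
    simp only [Finset.disjoint_insert_left, Finset.disjoint_singleton_left, Finset.mem_insert,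
      Finset.mem_singleton] at hdisj
    omega
  · intro h
    have hdisj : Disjoint ({a, b} : Finset ℕ) {c, d} := Finset.disjoint_left.2 (by grind)
    constructor
    · simp [Finset.card_pair hab.ne, Finset.card_pair hcd.ne]
    · grind
    · simp only [Finset.mem_insert, Finset.mem_singleton]
      rintro _ (rfl | rfl) _ (rfl | rfl) hne
      exacts [absurd rfl hne, hdisj, hdisj.symm, absurd rfl hne]

theorem skip_pairs (hab : a < b) (hac : a < c) (hcd : c < d) :
    skip {{a, b}, {c, d}} = (b - a - 1) + (d - c - 1) := by
  rw [skip, Finset.sum_pair (pair_ne_pair hac hcd), fmin_pair hab, fmax_pair hab, fmin_pair hcd,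
    fmax_pair hcd, Finset.card_pair hab.ne, Finset.card_pair hcd.ne]
  omega

theorem blockQuad_pairs (hab : a < b) (hac : a < c) (hcd : c < d) :
    blockQuad {{a, b}, {c, d}} = (a, b, c, d) := by
  have hne := pair_ne_pair (b := b) hac hcd
  have hns : nsBlocks {{a, b}, {c, d}} = {{a, b}, {c, d}} := Finset.filter_true_of_mem (by
    simp [Finset.card_pair hab.ne, Finset.card_pair hcd.ne])
  have hmin : fmin (({{a, b}, {c, d}} : Finset (Finset ℕ)).sup id) = a :=
    fmin_eq (by simp) (by grind [Finset.sup_singleton])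
  have hcontaining : blockContaining {{a, b}, {c, d}} a = {a, b} := by
    rw [blockContaining, Finset.filter_insert, if_pos (by simp), Finset.filter_singleton,
      if_neg (by grind), insert_empty_eq, Finset.sup_singleton, id]
  have hrest : (({{a, b}, {c, d}} : Finset (Finset ℕ)).erase {a, b}).sup id = {c, d} := by
    rw [Finset.erase_insert (by simpa using hne), Finset.sup_singleton, id]
  simp only [blockQuad, hns, hmin, hcontaining, hrest, Finset.card_pair hne, OfNat.ofNat_ne_one,
    if_false, fmin_pair hab, fmax_pair hab, fmin_pair hcd, fmax_pair hcd]

end TwoPairs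

/-- A pair of arcs `{i, j}` on the points `1, …, n` encoding the non-singleton blocks of a
noncrossing partition with `n - 2` blocks: `nested w x y z` stands for `{w, z}` around `{x, y}`,
where the degenerate inner arc `x = y` encodes the triple `{w, x, z}`, and `disjoint w x y z`
stands for `{w, x}` to the left of `{y, z}`. -/
inductive ArcPair (n : ℕ) : Type
  | nested (w x y z : ℕ) (one_le : 1 ≤ w) (hwx : w < x) (hxy : x ≤ y) (hyz : y < z) (le : z ≤ n)
  | disjoint (w x y z : ℕ) (one_le : 1 ≤ w) (hwx : w < x) (hxy : x < y) (hyz : y < z) (le : z ≤ n)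

namespace ArcPair

variable {n : ℕ}

/-- The skip statistic in terms of the arcs; see `skip_toNC`. -/
def skip : ArcPair n → ℕ
  | nested w x y z .. => (z - w - 2) + (y - x)
  | disjoint w x y z .. => (x - w - 1) + (z - y - 1)

/-- The leap statistic in terms of the arcs; see `leap_toNC`. -/
def leap : ArcPair n → ℕ
  | nested _ x .. => x - 2
  | disjoint _ x y .. => (y - 2) + (y - x)

end ArcPair

namespace ArcPair

variable {n : ℕ}

theorem three_le : ArcPair n → 3 ≤ n
  | nested .. | disjoint .. => by omega

/-- The non-singleton blocks encoded by an arc pair. -/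
def blocks : ArcPair n → Finset (Finset ℕ)
  | nested w x y z .. => if x = y then {{w, x, z}} else {{w, z}, {x, y}}
  | disjoint w x y z .. => {{w, x}, {y, z}}

/-- The quadruple `(a, b, c, d)` describing the blocks of an arc pair as in `blockQuad`. -/
def quad : ArcPair n → ℕ × ℕ × ℕ × ℕ
  | nested w x y z .. => if x = y then (w, x, y, z) else (w, z, x, y)
  | disjoint w x y z .. => (w, x, y, z)

theorem quad_injective : Function.Injective (quad (n := n)) := by
  intro A B h
  cases A <;> cases B <;> grind [quad]

theorem blockQuad_blocks (A : ArcPair n) : blockQuad A.blocks = A.quad := by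
  rcases A with ⟨w, x, y, z, _, hwx, hxy, hyz, _⟩ | ⟨w, x, y, z, _, hwx, hxy, hyz, _⟩
  · obtain rfl | hlt := hxy.eq_or_lt
    · simp only [blocks, quad, if_true, blockQuad_triple hwx hyz]
    · simp only [blocks, quad, hlt.ne, if_false, blockQuad_pairs (by omega : w < z) hwx hlt]
  · exact blockQuad_pairs hwx (hwx.trans hxy) hyz

theorem skip_blocks (A : ArcPair n) : QtN.skip A.blocks = A.skip := by
  rcases A with ⟨w, x, y, z, _, hwx, hxy, hyz, _⟩ | ⟨w, x, y, z, _, hwx, hxy, hyz, _⟩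
  · obtain rfl | hlt := hxy.eq_or_lt
    · simp only [blocks, skip, if_true, skip_triple hwx hyz]
      omega
    · simp only [blocks, skip, hlt.ne, if_false, skip_pairs (by omega : w < z) hwx hlt]
      omega
  · exact skip_pairs hwx (hwx.trans hxy) hyz

theorem bigBlocks_blocks (A : ArcPair n) : BigBlocks n A.blocks := by
  rcases A with ⟨w, x, y, z, one_le, hwx, hxy, hyz, le⟩ | ⟨w, x, y, z, one_le, hwx, hxy, hyz, le⟩
  · obtain rfl | hlt := hxy.eq_or_lt
    · simpa only [blocks, if_true] using (bigBlocks_triple_iff hwx hyz).2 ⟨one_le, le⟩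
    · simp only [blocks, hlt.ne, if_false]
      exact (bigBlocks_pairs_iff (by omega) hwx hlt).2 (by omega)
  · exact (bigBlocks_pairs_iff hwx (hwx.trans hxy) hyz).2 (by omega)

theorem isNoncrossing_blocks (A : ArcPair n) : IsNoncrossing A.blocks := by
  rcases A with ⟨w, x, y, z, _, hwx, hxy, hyz, _⟩ | ⟨w, x, y, z, _, hwx, hxy, hyz, _⟩
  · obtain rfl | hlt := hxy.eq_or_lt
    · simp [blocks, IsNoncrossing]
    · simp only [blocks, hlt.ne, if_false]
      exact (isNoncrossing_pairs_iff hwx hlt).2 (.inr hyz.le)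
  · exact (isNoncrossing_pairs_iff (hwx.trans hxy) hyz).2 (.inl hxy.le)

theorem sum_card_sub_one_blocks (A : ArcPair n) : ∑ β ∈ A.blocks, (β.card - 1) = 2 := by
  rcases A with ⟨w, x, y, z, _, hwx, hxy, hyz, _⟩ | ⟨w, x, y, z, _, hwx, hxy, hyz, _⟩
  · obtain rfl | hlt := hxy.eq_or_lt
    · simp [blocks, card_triple hwx hyz]
    · simp only [blocks, hlt.ne, if_false]
      rw [Finset.sum_pair (pair_ne_pair hwx hlt), Finset.card_pair (by omega),
        Finset.card_pair (by omega)]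
  · rw [blocks, Finset.sum_pair (pair_ne_pair (hwx.trans hxy) hyz), Finset.card_pair (by omega),
      Finset.card_pair (by omega)]

theorem exists_blocks_eq_pairs {a b c d : ℕ} (hab : a < b) (hac : a < c) (hcd : c < d)
    (hT : BigBlocks n {{a, b}, {c, d}}) (hnc : IsNoncrossing {{a, b}, {c, d}}) :
    ∃ A : ArcPair n, A.blocks = {{a, b}, {c, d}} := by
  obtain ⟨one_le, hbn, hdn, hbc, hbd⟩ := (bigBlocks_pairs_iff hab hac hcd).1 hT
  rcases (isNoncrossing_pairs_iff hac hcd).1 hnc with h | h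
  · exact ⟨disjoint a b c d one_le hab (h.lt_of_ne hbc) hcd hdn, rfl⟩
  · exact ⟨nested a c d b one_le hac hcd.le (h.lt_of_ne hbd.symm) hbn, if_neg hcd.ne⟩

theorem exists_blocks_eq {T : Finset (Finset ℕ)} (hT : BigBlocks n T) (hnc : IsNoncrossing T)
    (hsum : ∑ β ∈ T, (β.card - 1) = 2) : ∃ A : ArcPair n, A.blocks = T := by
  have hcard_le : T.card ≤ 2 := by
    rw [← hsum, Finset.card_eq_sum_ones]
    exact Finset.sum_le_sum fun β hβ => by have := hT.two_le_card β hβ; omega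
  interval_cases hcard : T.card
  · simp [Finset.card_eq_zero.1 hcard] at hsum
  · obtain ⟨β, rfl⟩ := Finset.card_eq_one.1 hcard
    rw [Finset.sum_singleton] at hsum
    obtain ⟨a, b, c, hab, hbc, rfl⟩ := exists_lt_lt_of_card_eq_three (s := β) (by omega)
    obtain ⟨one_le, hcn⟩ := (bigBlocks_triple_iff hab hbc).1 hT
    exact ⟨nested a b b c one_le hab le_rfl hbc hcn, if_pos rfl⟩
  · obtain ⟨β, γ, hne, rfl⟩ := Finset.card_eq_two.1 hcard
    rw [Finset.sum_pair hne] at hsum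
    have hβ := hT.two_le_card β (by simp)
    have hγ := hT.two_le_card γ (by simp)
    obtain ⟨a, b, hab, rfl⟩ := exists_lt_of_card_eq_two (s := β) (by omega)
    obtain ⟨c, d, hcd, rfl⟩ := exists_lt_of_card_eq_two (s := γ) (by omega)
    have hac : a ≠ c := by
      rintro rfl
      exact Finset.disjoint_left.1 (hT.disjoint _ (by simp) _ (by simp) hne)
        (Finset.mem_insert_self a {b}) (Finset.mem_insert_self a {d})
    rcases hac.lt_or_gt with hac | hca
    · exact exists_blocks_eq_pairs hab hac hcd hT hnc
    · rw [Finset.pair_comm] at hT hnc ⊢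
      exact exists_blocks_eq_pairs hcd hca hab hT hnc

/-- The noncrossing partition encoded by an arc pair. -/
def toNC (A : ArcPair n) : NC n 3 :=
  ⟨A.bigBlocks_blocks.completion, by
    rw [← isNoncrossing_nsBlocks_iff, A.bigBlocks_blocks.nsBlocks_completion]
    exact A.isNoncrossing_blocks, by
    have hcard := A.bigBlocks_blocks.completion.card_blocks_add_sum_nsBlocks
    rw [A.bigBlocks_blocks.nsBlocks_completion, A.sum_card_sub_one_blocks] at hcard
    have := A.three_le
    omega⟩

theorem nsBlocks_toNC (A : ArcPair n) : nsBlocks A.toNC.val.blocks = A.blocks :=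
  A.bigBlocks_blocks.nsBlocks_completion

theorem blockQuad_toNC (A : ArcPair n) : blockQuad A.toNC.val.blocks = A.quad := by
  rw [← blockQuad_nsBlocks, nsBlocks_toNC, blockQuad_blocks]

theorem skip_toNC (A : ArcPair n) : QtN.skip A.toNC.val.blocks = A.skip := by
  rw [← SetPartition.skip_nsBlocks, nsBlocks_toNC, skip_blocks]

theorem leap_toNC (A : ArcPair n) : QtN.leap A.toNC.val.blocks = A.leap := by
  rw [QtN.leap, blockQuad_toNC]
  cases A <;> grind [quad, leap]

theorem toNC_injective : Function.Injective (toNC (n := n)) := fun A B h =>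
  quad_injective (by rw [← blockQuad_toNC, h, blockQuad_toNC])

theorem toNC_surjective (hn : 3 ≤ n) : Function.Surjective (toNC (n := n)) := by
  rintro ⟨P, hnc, hcard⟩
  have hsum := P.card_blocks_add_sum_nsBlocks
  obtain ⟨A, hA⟩ := exists_blocks_eq P.bigBlocks_nsBlocks
    ((isNoncrossing_nsBlocks_iff _).2 hnc) (by omega)
  exact ⟨A, Subtype.ext (SetPartition.ext_nsBlocks (A.nsBlocks_toNC.trans hA))⟩

theorem toNC_bijective (hn : 3 ≤ n) : Function.Bijective (toNC (n := n)) :=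
  ⟨toNC_injective, toNC_surjective hn⟩

end ArcPair

/-! ### Matching arcs and rows -/

/-- Common coordinates for the arc pairs on `m + 2` points and the polyominoes of size `m × 3`. In
the families `far`, `deep` and `bottom` the parameters are those of the arcs. The statistics of
`box ℓ k t` are `leap = ℓ` and `skip = (k - 1) + (t - ℓ)`, so that for fixed `ℓ` this family is a
rectangle `[1, m - 1] × [ℓ, m]` weighted by the taxicab distance to a corner. -/
inductive Code (m : ℕ) : Type
  | far (w x y z : ℕ) (one_le : 1 ≤ w) (hwx : w < x) (hxy : x + 2 ≤ y) (hyz : y < z)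
      (le : z ≤ m + 2)
  | deep (w x y z : ℕ) (three_le : 3 ≤ w) (hwx : w < x) (hxy : x ≤ y) (hyz : y < z)
      (le : z ≤ m + 2)
  | bottom (y z : ℕ) (two_le : 2 ≤ y) (hyz : y < z) (le : z ≤ m + 2)
  | box (ℓ k t : ℕ) (one_le_ℓ : 1 ≤ ℓ) (hℓt : ℓ ≤ t) (htm : t ≤ m) (one_le_k : 1 ≤ k) (hkm : k < m)

namespace Code

variable {m : ℕ}

/-- The arcs with a given code. The rectangle of the codes `box ℓ k t` is cut along `k = ℓ` and
`k = t` into the disjoint pairs with adjacent arcs and the nested pairs starting at `2` or `1`. -/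
def toArcPair : Code m → ArcPair (m + 2)
  | far w x y z h₁ hwx hxy hyz hz => .disjoint w x y z h₁ hwx (by omega) hyz hz
  | deep w x y z h₃ hwx hxy hyz hz => .nested w x y z (by omega) hwx hxy hyz hz
  | bottom y z h₂ hyz hz => .nested 1 2 y z le_rfl (by omega) h₂ hyz hz
  | box ℓ k t hℓ hℓt htm hk hkm =>
    if hkℓ : k < ℓ then
      .disjoint (ℓ - k) ℓ (ℓ + 1) (t + 2) (by omega) (by omega) (by omega) (by omega) (by omega)
    else if htk : t ≤ k then
      .nested 2 (ℓ + 2) (t + 2) (k + 3) (by omega) (by omega) (by omega) (by omega) (by omega)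
    else
      .nested 1 (ℓ + 2) (k + 2) (t + 2) (by omega) (by omega) (by omega) (by omega) (by omega)

/-- The polyomino coordinates with a given code. The rectangle of the codes `box ℓ k t` is cut
along `k = m - ℓ` into the polyominoes with `u₂ = 0` and those with `u₂ = 1` and `u₃ < l₁`. -/
def toThreeRow : Code m → ThreeRow m
  | far w x y z h₁ hwx hxy hyz hz =>
    ⟨m + 3 - z, m + 2 - y + w, m + 3 - y, m + 2 - y + x,
      by omega, by omega, by omega, by omega, by omega⟩
  | deep w x y z h₃ hwx hxy hyz hz =>
    ⟨m + 4 - z, m + 3 - y, m + 4 - x, m + 3 - w,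
      by omega, by omega, by omega, by omega, by omega⟩
  | bottom y z h₂ hyz hz =>
    ⟨0, 0, y - 1, z - 2, by omega, by omega, by omega, by omega, by omega⟩
  | box ℓ k t hℓ hℓt htm hk hkm =>
    if h : k + ℓ ≤ m then
      ⟨0, m - ℓ - k + 1, t - ℓ + 1, m - ℓ + 1, by omega, by omega, by omega, by omega, by omega⟩
    else
      ⟨1, m + 1 - t, m + 2 - ℓ, k + 1, by omega, by omega, by omega, by omega, by omega⟩

theorem skip_toArcPair_eq_area (c : Code m) : c.toArcPair.skip = c.toThreeRow.area := by
  cases c <;> grind [toArcPair, toThreeRow, ArcPair.skip, ThreeRow.area]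

theorem leap_toArcPair_eq_bounce (c : Code m) : c.toArcPair.leap = c.toThreeRow.bounce := by
  cases c <;> grind [toArcPair, toThreeRow, ArcPair.leap, ThreeRow.bounce]

theorem toArcPair_injective : Function.Injective (toArcPair (m := m)) := by
  intro c c' h
  cases c <;> cases c' <;> grind [toArcPair]

theorem toThreeRow_injective : Function.Injective (toThreeRow (m := m)) := by
  intro c c' h
  cases c <;> cases c' <;> grind [toThreeRow]

theorem toArcPair_surjective : Function.Surjective (toArcPair (m := m)) := by
  rintro (⟨w, x, y, z, h₁, hwx, hxy, hyz, hz⟩ | ⟨w, x, y, z, h₁, hwx, hxy, hyz, hz⟩)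
  · obtain hw | rfl | ⟨rfl, hx⟩ | ⟨rfl, rfl⟩ :
        3 ≤ w ∨ w = 2 ∨ (w = 1 ∧ 3 ≤ x) ∨ (w = 1 ∧ x = 2) := by omega
    · exact ⟨deep w x y z hw hwx hxy hyz hz, rfl⟩
    · use box (x - 2) (z - 3) (y - 2) (by omega) (by omega) (by omega) (by omega) (by omega)
      grind [toArcPair]
    · use box (x - 2) (y - 2) (z - 2) (by omega) (by omega) (by omega) (by omega) (by omega)
      grind [toArcPair]
    · exact ⟨bottom y z hxy hyz hz, rfl⟩
  · obtain hxy' | rfl : x + 2 ≤ y ∨ y = x + 1 := by omega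
    · exact ⟨far w x y z h₁ hwx hxy' hyz hz, rfl⟩
    · use box x (x - w) (z - 2) (by omega) (by omega) (by omega) (by omega) (by omega)
      grind [toArcPair]

theorem toThreeRow_surjective : Function.Surjective (toThreeRow (m := m)) := by
  rintro ⟨u₂, u₃, l₁, l₂, hu, h₁, h₂, hl, hm⟩
  obtain hfar | ⟨rfl, rfl⟩ | ⟨rfl, hu₃⟩ | ⟨rfl, hrow⟩ | ⟨hu₂, hrow⟩ :
      (1 ≤ u₂ ∧ l₁ ≤ u₃) ∨ (u₂ = 0 ∧ u₃ = 0) ∨ (u₂ = 0 ∧ 1 ≤ u₃) ∨ (u₂ = 1 ∧ u₃ < l₁) ∨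
        (2 ≤ u₂ ∧ u₃ < l₁) := by omega
  · use far (u₃ + 1 - l₁) (l₂ + 1 - l₁) (m + 3 - l₁) (m + 3 - u₂)
      (by omega) (by omega) (by omega) (by omega) (by omega)
    grind [toThreeRow]
  · exact ⟨bottom (l₁ + 1) (l₂ + 2) (by omega) (by omega) (by omega), rfl⟩
  · use box (m + 1 - l₂) (l₂ - u₃) (l₁ + m - l₂)
      (by omega) (by omega) (by omega) (by omega) (by omega)
    grind [toThreeRow]
  · use box (m + 2 - l₁) (l₂ - 1) (m + 1 - u₃)
      (by omega) (by omega) (by omega) (by omega) (by omega)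
    grind [toThreeRow]
  · use deep (m + 3 - l₂) (m + 4 - l₁) (m + 3 - u₃) (m + 4 - u₂)
      (by omega) (by omega) (by omega) (by omega) (by omega)
    grind [toThreeRow]

theorem toArcPair_bijective : Function.Bijective (toArcPair (m := m)) :=
  ⟨toArcPair_injective, toArcPair_surjective⟩

theorem toThreeRow_bijective : Function.Bijective (toThreeRow (m := m)) :=
  ⟨toThreeRow_injective, toThreeRow_surjective⟩

end Code

theorem card_subtype_comp_of_bijective {α β : Type*} {f : α → β} (hf : Function.Bijective f)
    (p : β → Prop) : Nat.card {a // p (f a)} = Nat.card {b // p b} :=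
  Nat.card_congr ((Equiv.ofBijective f hf).subtypeEquiv fun _ => Iff.rfl)

/-- The pair (skip, leap) is a combinatorial interpretation of `N_{n,3}(q,t)`:
for all `n ≥ 3` and `u v`, the number of `π ∈ NC(n,3)` with `skip π = u` and
`leap π = v` equals the number of `P ∈ PP(n-2,3)` with `area P = u`, `bounce P = v`. -/
theorem skip_leap_pair (n u v : ℕ) (hn : 3 ≤ n) :
    Nat.card {π : NC n 3 // skip π.val.blocks = u ∧ leap π.val.blocks = v} =
    Nat.card {P : Polyomino (n - 2) 3 // area P = u ∧ bounce P = v} := by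
  obtain ⟨m, rfl⟩ : ∃ m, n = m + 2 := ⟨n - 2, by omega⟩
  calc Nat.card {π : NC (m + 2) 3 // skip π.val.blocks = u ∧ leap π.val.blocks = v}
      = Nat.card {A : ArcPair (m + 2) // A.skip = u ∧ A.leap = v} := by
        simp only [← card_subtype_comp_of_bijective (ArcPair.toNC_bijective hn),
          ArcPair.skip_toNC, ArcPair.leap_toNC]
    _ = Nat.card {c : Code m // c.toThreeRow.area = u ∧ c.toThreeRow.bounce = v} := by
        simp only [← card_subtype_comp_of_bijective Code.toArcPair_bijective,
          Code.skip_toArcPair_eq_area, Code.leap_toArcPair_eq_bounce]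
    _ = Nat.card {T : ThreeRow m // T.area = u ∧ T.bounce = v} :=
        card_subtype_comp_of_bijective Code.toThreeRow_bijective fun T =>
          T.area = u ∧ T.bounce = v
    _ = Nat.card {P : Polyomino m 3 // area P = u ∧ bounce P = v} := by
        simp only [← card_subtype_comp_of_bijective ThreeRow.toPolyomino_bijective,
          ThreeRow.area_toPolyomino, ThreeRow.bounce_toPolyomino]

end QtN
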